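/- Let 0 ≤ h < k, let n = ⌊km/(h+1)⌋, assume k < n and km − (h+2)·⌊km/(h+1)⌋ < 0. Let U be an [n,k]_{q^m/q} system and let C be a nondegenerate [n,k]_{q^m/q} code associated to U. Then U is h-scattered (hence quasi-maximum h-scattered, since dim_{𝔽_q} U = ⌊km/(h+1)⌋) if and only if C^⊥ is quasi-MRD, i.e., Rdef(C^⊥) = m − ⌈(n−k)m/n⌉ − d(C^⊥) + 1 = 0. -/

import Mathlib

open Module Submodule

noncomputable section

variable (Fq Fqm : Type) [Field Fq] [Field Fqm] [Algebra Fq Fqm]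

/-- Rank weight of a vector in `Fqm^n`: the `Fq`-dimension of the span of its entries. -/
def rankWeight {n : ℕ} (v : Fin n → Fqm) : ℕ :=
  finrank Fq (span Fq (Set.range v))

/-- Minimum rank distance of a code. -/
def minRankDist {n : ℕ} (C : Submodule Fqm (Fin n → Fqm)) : ℕ :=
  sInf {w : ℕ | ∃ v ∈ C, v ≠ 0 ∧ rankWeight Fq Fqm v = w}

/-- Dual code with respect to the standard bilinear form. -/
def dualCode {n : ℕ} (C : Submodule Fqm (Fin n → Fqm)) : Submodule Fqm (Fin n → Fqm) where
  carrier := {v | ∀ c ∈ C, ∑ i, c i * v i = 0}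
  add_mem' := by
    intro a b ha hb c hc
    simp only [Set.mem_setOf_eq] at ha hb
    simp only [Pi.add_apply, mul_add, Finset.sum_add_distrib, ha c hc, hb c hc, add_zero]
  zero_mem' := by
    intro c hc
    simp
  smul_mem' := by
    intro t a ha c hc
    simp only [Set.mem_setOf_eq] at ha
    have key : (∑ i, c i * (t • a) i) = t * ∑ i, c i * a i := by
      rw [Finset.mul_sum]
      refine Finset.sum_congr rfl fun i _ => ?_
      simp only [Pi.smul_apply, smul_eq_mul]
      ring
    simp only [Set.mem_setOf_eq, key, ha c hc, mul_zero]

/-- An `Fqm`-subspace of `Fqm^n` is Galois closed if it is stable under the componentwise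
action of every element of `Gal(Fqm/Fq)`. -/
def GaloisClosed {n : ℕ} (A : Submodule Fqm (Fin n → Fqm)) : Prop :=
  ∀ θ : Fqm ≃ₐ[Fq] Fqm, ∀ v ∈ A, (fun i => θ (v i)) ∈ A

/-- The `s`-th generalized rank weight of a code `C`. -/
def grw {n : ℕ} (C : Submodule Fqm (Fin n → Fqm)) (s : ℕ) : ℕ :=
  sInf {x : ℕ | ∃ A : Submodule Fqm (Fin n → Fqm),
    GaloisClosed Fq Fqm A ∧ s ≤ finrank Fqm ↥(A ⊓ C) ∧ finrank Fqm ↥A = x}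

/-- `G` (given as the tuple of its rows) is a generator matrix for `C`. -/
def IsGenMatrix {n k : ℕ} (C : Submodule Fqm (Fin n → Fqm)) (G : Fin k → Fin n → Fqm) : Prop :=
  C = span Fqm (Set.range G)

/-- A code is nondegenerate if the `Fq`-span of the columns of a generator matrix has
`Fq`-dimension `n`. -/
def IsNondegenerate {n : ℕ} (k : ℕ) (C : Submodule Fqm (Fin n → Fqm)) : Prop :=
  ∃ G : Fin k → Fin n → Fqm, IsGenMatrix Fqm C G ∧
    finrank Fq ↥(span Fq (Set.range fun j : Fin n => fun i : Fin k => G i j)) = n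

/-- `U` is a system associated to the code `C`: `U` is the `Fq`-span of the columns of some
generator matrix of `C`. -/
def IsAssociatedSystem {n k : ℕ} (C : Submodule Fqm (Fin n → Fqm))
    (U : Submodule Fq (Fin k → Fqm)) : Prop :=
  ∃ G : Fin k → Fin n → Fqm, IsGenMatrix Fqm C G ∧
    U = span Fq (Set.range fun j : Fin n => fun i : Fin k => G i j)

/-- `U` is an `[n,k]` system: an `n`-dimensional `Fq`-subspace of `Fqm^k` whose
`Fqm`-span is everything. -/
def IsSystem {k : ℕ} (n : ℕ) (U : Submodule Fq (Fin k → Fqm)) : Prop :=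
  finrank Fq ↥U = n ∧ span Fqm (U : Set (Fin k → Fqm)) = ⊤

/-- `U` is `(h,r)`-evasive: every `h`-dimensional `Fqm`-subspace meets `U` in `Fq`-dimension
at most `r`. -/
def IsEvasive {k : ℕ} (U : Submodule Fq (Fin k → Fqm)) (h r : ℕ) : Prop :=
  ∀ W : Submodule Fqm (Fin k → Fqm), finrank Fqm ↥W = h →
    finrank Fq ↥(U ⊓ W.restrictScalars Fq) ≤ r

/-- A `k`-dimensional code `C ⊆ Fqm^n` is near MRD if `d₁(C) = n-k` and `dₛ(C) = n-k+s`
for all `2 ≤ s ≤ k`. -/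
def IsNearMRD {n : ℕ} (k : ℕ) (C : Submodule Fqm (Fin n → Fqm)) : Prop :=
  grw Fq Fqm C 1 = n - k ∧ ∀ s : ℕ, 2 ≤ s → s ≤ k → grw Fq Fqm C s = n - k + s

section Helpers

variable {Fq Fqm}

theorem evasive_down {k : ℕ} [FiniteDimensional Fq Fqm] {U : Submodule Fq (Fin k → Fqm)}
    (hsp : span Fqm (U : Set (Fin k → Fqm)) = ⊤) {h : ℕ} (hk : h < k)
    (he : IsEvasive Fq Fqm U h h) (s : ℕ) (hs : s ≤ h) : IsEvasive Fq Fqm U s s := by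
  induction hs using Nat.decreasingInduction with
  | self => exact he
  | of_succ s hs ih =>
    intro W hW
    have hex : ∃ u ∈ U, u ∉ W := by
      by_contra! hcon
      have h1 : span Fqm (U : Set (Fin k → Fqm)) ≤ W := span_le.2 hcon
      rw [hsp, top_le_iff] at h1
      rw [h1, finrank_top, finrank_fin_fun] at hW
      omega
    obtain ⟨u, huU, huW⟩ := hex
    have hu0 : u ≠ 0 := by
      rintro rfl
      exact huW W.zero_mem
    have hW1 : s < finrank Fqm ↥(W ⊔ span Fqm {u}) := by
      rw [← hW]
      apply finrank_lt_finrank_of_lt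
      refine lt_of_le_of_ne le_sup_left fun heq => huW ?_
      rw [heq]
      exact mem_sup_right (mem_span_singleton_self u)
    have hW2 : finrank Fqm ↥(W ⊔ span Fqm {u}) ≤ s + 1 := by
      have := Submodule.finrank_add_le_finrank_add_finrank W (span Fqm {u})
      rw [finrank_span_singleton hu0, hW] at this
      exact this
    have h3 := ih (W ⊔ span Fqm {u}) (by omega)
    have h4 : finrank Fq ↥(U ⊓ W.restrictScalars Fq) <
        finrank Fq ↥(U ⊓ (W ⊔ span Fqm {u}).restrictScalars Fq) := by
      apply finrank_lt_finrank_of_lt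
      refine lt_of_le_of_ne ?_ fun heq => huW ?_
      · exact inf_le_inf_left _ (fun x hx => (le_sup_left : W ≤ W ⊔ span Fqm {u}) hx)
      · have : u ∈ U ⊓ (W ⊔ span Fqm {u}).restrictScalars Fq :=
          ⟨huU, (mem_sup_right (mem_span_singleton_self u) : u ∈ W ⊔ span Fqm {u})⟩
        rw [← heq] at this
        exact this.2
    omega

theorem mem_dual_iff {n k : ℕ} {C : Submodule Fqm (Fin n → Fqm)} {G : Fin k → Fin n → Fqm}
    (hG : IsGenMatrix Fqm C G) (v : Fin n → Fqm) :
    v ∈ dualCode Fqm C ↔ ∀ i, ∑ j, G i j * v j = 0 := by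
  constructor
  · intro hv i
    apply hv
    rw [hG]
    exact subset_span ⟨i, rfl⟩
  · intro hv c hc
    rw [hG] at hc
    induction hc using span_induction with
    | mem x hx => obtain ⟨i, rfl⟩ := hx; exact hv i
    | zero => simp
    | add x y _ _ hx hy => simp [add_mul, Finset.sum_add_distrib, hx, hy]
    | smul a x _ hx => simp [mul_assoc, ← Finset.mul_sum, hx]

theorem mem_dual_iff_cols {n k : ℕ} {C : Submodule Fqm (Fin n → Fqm)} {G : Fin k → Fin n → Fqm}
    (hG : IsGenMatrix Fqm C G) (v : Fin n → Fqm) :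
    v ∈ dualCode Fqm C ↔ ∑ j, v j • (fun i => G i j) = 0 := by
  rw [mem_dual_iff hG, funext_iff]
  simp [Finset.sum_apply, mul_comm]

theorem evasive_of_weight {n k h : ℕ} [FiniteDimensional Fq Fqm] (g : Fin n → Fin k → Fqm)
    (hw : ∀ v : Fin n → Fqm, v ≠ 0 → ∑ j, v j • g j = 0 → h + 2 ≤ rankWeight Fq Fqm v) :
    IsEvasive Fq Fqm (span Fq (Set.range g)) h h := by
  intro W hW
  by_contra! hcon
  obtain ⟨u, hu⟩ := exists_linearIndependent_of_le_finrank (Nat.succ_le_of_lt hcon)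
  have hB : ∀ i, ∃ c : Fin n → Fq, ∑ j, c j • g j = (u i : Fin k → Fqm) := fun i =>
    (mem_span_range_iff_exists_fun Fq).1 (u i).2.1
  choose B hB using hB
  have hdep : ¬ LinearIndependent Fqm (fun i => (⟨(u i : Fin k → Fqm), (u i).2.2⟩ : W)) := by
    intro hli
    have := hli.fintype_card_le_finrank
    simp [hW] at this
  rw [Fintype.not_linearIndependent_iff] at hdep
  obtain ⟨a, ha, i0, hi0⟩ := hdep
  have ha' : ∑ i, a i • (u i : Fin k → Fqm) = 0 := by
    have := congrArg (W.subtype) ha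
    simpa using this
  let v : Fin n → Fqm := fun j => ∑ i, B i j • a i
  have hv0 : v ≠ 0 := by
    intro hv
    apply hi0
    rw [← Module.forall_dual_apply_eq_zero_iff Fq]
    intro φ
    have h1 : ∑ i, φ (a i) • u i = 0 := by
      apply Subtype.ext
      push_cast
      simp only [← hB, Finset.smul_sum]
      rw [Finset.sum_comm]
      apply Finset.sum_eq_zero
      intro j _
      simp only [smul_smul, ← Finset.sum_smul]
      have h2 : φ (v j) = 0 := by rw [hv]; simp
      have h3 : ∑ i, φ (a i) * B i j = φ (v j) := by
        simp [v, map_sum, mul_comm]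
      rw [h3, h2, zero_smul]
    exact Fintype.linearIndependent_iff.1 hu _ h1 i0
  have hvs : ∑ j, v j • g j = 0 := by
    rw [← ha']
    simp only [← hB, Finset.smul_sum, v, Finset.sum_smul]
    rw [Finset.sum_comm]
    refine Finset.sum_congr rfl fun i _ => Finset.sum_congr rfl fun j _ => ?_
    rw [smul_assoc, smul_comm]
  have h5 := hw v hv0 hvs
  have h6 : rankWeight Fq Fqm v ≤ h + 1 := by
    have h7 : span Fq (Set.range v) ≤ span Fq (Set.range a) := by
      rw [span_le]
      rintro _ ⟨j, rfl⟩
      exact sum_mem fun i _ => smul_mem _ _ (subset_span ⟨i, rfl⟩)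
    have h8 := finrank_range_le_card (R := Fq) a
    have h9 := finrank_mono h7
    simp only [Fintype.card_fin] at h8
    exact h9.trans h8
  omega

theorem weight_of_evasive {n k h : ℕ} [FiniteDimensional Fq Fqm] (g : Fin n → Fin k → Fqm)
    (hg : LinearIndependent Fq g)
    (he : ∀ s ≤ h, IsEvasive Fq Fqm (span Fq (Set.range g)) s s)
    (v : Fin n → Fqm) (hv0 : v ≠ 0) (hv : ∑ j, v j • g j = 0) :
    h + 2 ≤ rankWeight Fq Fqm v := by
  by_contra! hcon
  let S := span Fq (Set.range v)
  have hvS : ∀ j, v j ∈ S := fun j => subset_span ⟨j, rfl⟩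
  let b := finBasis Fq S
  let w := finrank Fq S
  have hww : w < h + 2 := hcon
  let B : Fin w → Fin n → Fq := fun i j => b.repr ⟨v j, hvS j⟩ i
  have hBv : ∀ j, ∑ i, B i j • (b i : Fqm) = v j := by
    intro j
    have := congrArg (S.subtype) (b.sum_repr ⟨v j, hvS j⟩)
    rw [map_sum] at this
    exact this
  let u : Fin w → Fin k → Fqm := fun i => ∑ j, B i j • g j
  have hau : ∑ i, (b i : Fqm) • u i = 0 := by
    rw [← hv]
    simp only [u, Finset.smul_sum]
    rw [Finset.sum_comm]
    refine Finset.sum_congr rfl fun j _ => ?_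
    rw [← hBv, Finset.sum_smul]
    refine Finset.sum_congr rfl fun i _ => ?_
    rw [smul_assoc, smul_comm]
  have hu : LinearIndependent Fq u := by
    rw [Fintype.linearIndependent_iff]
    intro c hc i
    have h1 : ∀ j, ∑ i, c i * B i j = 0 := by
      apply Fintype.linearIndependent_iff.1 hg
      rw [← hc]
      simp only [u, Finset.smul_sum, Finset.sum_smul]
      rw [Finset.sum_comm]
      simp only [mul_smul]
    let f : S →ₗ[Fq] Fq := b.constr Fq c
    have hf : ∀ x, ∀ hx : x ∈ S, f ⟨x, hx⟩ = 0 := by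
      intro x hx
      induction hx using span_induction with
      | mem x hx =>
        obtain ⟨j, rfl⟩ := hx
        rw [← h1 j, Module.Basis.constr_apply_fintype]
        refine Finset.sum_congr rfl fun i _ => ?_
        simp [B, mul_comm]
      | zero => exact map_zero f
      | add x y hx hy h1 h2 =>
        have := map_add f ⟨x, hx⟩ ⟨y, hy⟩
        rw [h1, h2, add_zero] at this
        exact this
      | smul a x hx h1 =>
        have := map_smul f a ⟨x, hx⟩
        rw [h1, smul_zero] at this
        exact this
    have h2 : f (b i) = c i := b.constr_basis Fq c i
    rw [← h2]
    exact hf _ (b i).2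
  have hw0 : 0 < w := by
    obtain ⟨j, hj⟩ := Function.ne_iff.1 hv0
    rw [Module.finrank_pos_iff]
    exact ⟨⟨⟨v j, hvS j⟩, 0, fun h => hj (congrArg Subtype.val h)⟩⟩
  have hdep : ¬ LinearIndependent Fqm u := by
    rw [Fintype.not_linearIndependent_iff]
    refine ⟨fun i => (b i : Fqm), hau, ⟨0, hw0⟩, ?_⟩
    intro h0
    exact b.ne_zero ⟨0, hw0⟩ (Subtype.ext h0)
  have hs : finrank Fqm (span Fqm (Set.range u)) < w := by
    have h1 := finrank_range_le_card (R := Fqm) u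
    rw [linearIndependent_iff_card_eq_finrank_span] at hdep
    simp only [Fintype.card_fin] at h1 hdep
    exact lt_of_le_of_ne h1 (fun h => hdep h.symm)
  have h1 := he (finrank Fqm (span Fqm (Set.range u))) (by omega) _ rfl
  have h2 : span Fq (Set.range u) ≤
      span Fq (Set.range g) ⊓ (span Fqm (Set.range u)).restrictScalars Fq := by
    rw [span_le]
    rintro _ ⟨i, rfl⟩
    refine ⟨sum_mem fun j _ => smul_mem _ _ (subset_span ⟨j, rfl⟩), ?_⟩
    exact (subset_span ⟨i, rfl⟩ : u i ∈ span Fqm (Set.range u))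
  have h3 := finrank_mono h2
  rw [finrank_span_eq_card hu, Fintype.card_fin] at h3
  omega

theorem le_finrank_dual {n k : ℕ} {C : Submodule Fqm (Fin n → Fqm)} {G : Fin k → Fin n → Fqm}
    (hG : IsGenMatrix Fqm C G) : n ≤ finrank Fqm (dualCode Fqm C) + k := by
  let f := (Matrix.of G).mulVecLin
  have hk : LinearMap.ker f = dualCode Fqm C := by
    ext v
    rw [mem_dual_iff hG, LinearMap.mem_ker, funext_iff]
    rfl
  have h1 := f.finrank_range_add_finrank_ker
  have h2 := Submodule.finrank_le (LinearMap.range f)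
  rw [hk] at h1
  simp only [finrank_fin_fun] at h1 h2
  omega

theorem exists_low_weight {n k t : ℕ} [FiniteDimensional Fq Fqm]
    {D : Submodule Fqm (Fin n → Fqm)} (hD : n ≤ finrank Fqm D + k) (hkn : k < n)
    (ht : k * finrank Fq Fqm < t * n) :
    ∃ v ∈ D, v ≠ 0 ∧ rankWeight Fq Fqm v ≤ t := by
  by_cases htm : finrank Fq Fqm ≤ t
  · have : D ≠ ⊥ := by
      rintro rfl
      simp at hD
      omega
    obtain ⟨v, hv, h0⟩ := D.exists_mem_ne_zero_of_ne_bot this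
    exact ⟨v, hv, h0, (Submodule.finrank_le _).trans htm⟩
  push Not at htm
  obtain ⟨K, hK⟩ : ∃ K : Submodule Fq Fqm, finrank Fq K = t := by
    obtain ⟨u, hu⟩ := exists_linearIndependent_of_le_finrank htm.le
    exact ⟨span Fq (Set.range u), by simpa using finrank_span_eq_card hu⟩
  let F : (Fin n → Fqm) →ₗ[Fq] (Fin n → Fqm ⧸ K) := K.mkQ.compLeft (Fin n)
  let F' : D.restrictScalars Fq →ₗ[Fq] (Fin n → Fqm ⧸ K) := F ∘ₗ (D.restrictScalars Fq).subtype
  have hni : ¬ Function.Injective F' := by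
    intro hi
    have h1 := LinearMap.finrank_le_finrank_of_injective hi
    have h2 : finrank Fq (D.restrictScalars Fq) = finrank Fq Fqm * finrank Fqm D :=
      (finrank_mul_finrank Fq Fqm D).symm
    rw [h2, Module.finrank_pi_fintype] at h1
    have h3 := K.finrank_quotient_add_finrank
    simp only [Finset.sum_const, Finset.card_univ, Fintype.card_fin, smul_eq_mul] at h1
    rw [hK] at h3
    nlinarith
  rw [← LinearMap.ker_eq_bot] at hni
  obtain ⟨v, hv, h0⟩ := Submodule.exists_mem_ne_zero_of_ne_bot hni
  refine ⟨v, v.2, fun h => h0 (Subtype.ext h), ?_⟩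
  rw [← hK]
  apply finrank_mono
  rw [span_le]
  rintro _ ⟨j, rfl⟩
  have h1 := congrFun (LinearMap.mem_ker.1 hv) j
  exact (Submodule.Quotient.mk_eq_zero K).1 h1

end Helpers

/-- with `n = ⌊km/(h+1)⌋` and `km - (h+2)⌊km/(h+1)⌋ < 0`, `U` is (quasi-maximum)
`h`-scattered iff `C^⊥` is quasi-MRD, i.e. its Singleton rank defect is `0`. -/
theorem stmt19 [Fintype Fq] (n k m h : ℕ) (hm : finrank Fq Fqm = m)
    (hhk : h < k) (hkn : k < n) (hn : n = k * m / (h + 1))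
    (hcond : (k * m : ℤ) - ((h : ℤ) + 2) * ((k * m / (h + 1) : ℕ) : ℤ) < 0)
    (C : Submodule Fqm (Fin n → Fqm)) (hdim : finrank Fqm ↥C = k)
    (hnd : IsNondegenerate Fq Fqm k C)
    (U : Submodule Fq (Fin k → Fqm)) (hsys : IsSystem Fq Fqm n U)
    (hU : IsAssociatedSystem Fq Fqm C U) :
    IsEvasive Fq Fqm U h h ↔
      (m : ℤ) - ⌈(((n : ℚ) - k) * m) / n⌉ - (minRankDist Fq Fqm (dualCode Fqm C) : ℤ) + 1
        = 0 := by
  have hn0 : 0 < n := by omega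
  have hm0 : 0 < m := by
    rcases Nat.eq_zero_or_pos m with h0 | h0
    · subst h0; simp at hn; omega
    · exact h0
  haveI : FiniteDimensional Fq Fqm := FiniteDimensional.of_finrank_pos (by omega)
  have hlow : (h + 1) * n ≤ k * m := by
    rw [hn]; exact Nat.mul_div_le _ _
  have hup : k * m < (h + 2) * n := by
    rw [← hn] at hcond
    zify
    linarith
  have hceil : ⌈(((n : ℚ) - k) * m) / n⌉ = (m : ℤ) - (h + 1) := by
    have hnq : (0 : ℚ) < n := by exact_mod_cast hn0
    have h1 : ((h : ℚ) + 1) * n ≤ k * m := by exact_mod_cast hlow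
    have h2 : (k : ℚ) * m < (h + 2) * n := by exact_mod_cast hup
    rw [Int.ceil_eq_iff]
    push_cast
    rw [lt_div_iff₀ hnq, div_le_iff₀ hnq]
    constructor <;> nlinarith
  rw [hceil]
  obtain ⟨G, hG, hUG⟩ := hU
  obtain ⟨hUn, hUsp⟩ := hsys
  have hg : LinearIndependent Fq (fun j : Fin n => fun i : Fin k => G i j) := by
    rw [linearIndependent_iff_card_eq_finrank_span, Fintype.card_fin, Set.finrank, ← hUG, hUn]
  obtain ⟨v0, hv0D, hv00, hv0w⟩ := exists_low_weight (Fq := Fq) (t := h + 2)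
    (le_finrank_dual hG) hkn (by rw [hm]; exact hup)
  have hdle : minRankDist Fq Fqm (dualCode Fqm C) ≤ h + 2 :=
    le_trans (Nat.sInf_le (show rankWeight Fq Fqm v0 ∈ _ from ⟨v0, hv0D, hv00, rfl⟩)) hv0w
  constructor
  · intro he
    have hall := weight_of_evasive _ hg (fun s hs => by
      rw [← hUG]; exact evasive_down hUsp hhk he s hs)
    have hge : h + 2 ≤ minRankDist Fq Fqm (dualCode Fqm C) := by
      have hne : {w : ℕ | ∃ v ∈ dualCode Fqm C, v ≠ 0 ∧ rankWeight Fq Fqm v = w}.Nonempty :=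
        ⟨rankWeight Fq Fqm v0, v0, hv0D, hv00, rfl⟩
      refine le_csInf hne ?_
      rintro _ ⟨v, hv, h0, rfl⟩
      exact hall v h0 ((mem_dual_iff_cols hG v).1 hv)
    omega
  · intro hd
    rw [hUG]
    apply evasive_of_weight
    intro v h0 hv
    have : minRankDist Fq Fqm (dualCode Fqm C) ≤ rankWeight Fq Fqm v :=
      Nat.sInf_le ⟨v, (mem_dual_iff_cols hG v).2 hv, h0, rfl⟩
    omega
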